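/- Assume that every one-letter word is good, and that every word whose Lyndon factorization consists entirely of good Lyndon words is itself good. Then every word is integral if and only if for every pair (l_1, l_2) of good Lyndon words with l_1 < l_2 lexicographically and l_1 l_2 not good, the word l_1 l_2 is integral. -/

import Mathlib

/-!
Only one direction has content. The order `≺` is well founded and compatible with concatenation
on both sides, so by induction a word `w` is integral as soon as `B_w` is a
`ℤ[q, q⁻¹]`-combination of words `≺ w` (`integral_of_mem_span`). In particular a word containing
a factor that is integral but not good is integral once all smaller words are
(`integral_of_factor`).

It remains to see that a word `w` which is not good contains a factor `l₁ l₂` as in the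
hypothesis. Since letters are good Lyndon words, `w` can be written as a product of good Lyndon
words; consider such a product. If the factors are lexicographically non-increasing, `w` is good.
Otherwise there are consecutive factors `l₁ < l₂`, and then `l₁ l₂` is Lyndon
(`IsLyndon.append`). If it is good, merging the two gives a product with fewer factors;
if not, `l₁ l₂` is the factor sought (`good_or_exists_factor`).
-/

/-- The lexicographic order on words over the alphabet `v_0 < v_1 < ⋯ < v_{n-1}`
(indexed by `Fin n`), in which a word is smaller than any word having it as a proper prefix. -/
def LexLt {n : ℕ} (x y : List (Fin n)) : Prop := List.Lex (· < ·) x y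

/-- The order `≺` : `x ≺ y` iff `ℓ(x) < ℓ(y)`, or `ℓ(x) = ℓ(y)` and `x > y` lexicographically. -/
def PrecLt {n : ℕ} (x y : List (Fin n)) : Prop :=
  x.length < y.length ∨ (x.length = y.length ∧ LexLt y x)

/-- The order `≼` : `x ≼ y` iff `x ≺ y` or `x = y`. -/
def PrecLe {n : ℕ} (x y : List (Fin n)) : Prop := PrecLt x y ∨ x = y

/-- A nonempty word is Lyndon if it is lexicographically strictly smaller than every proper
nonempty suffix of itself. -/
def IsLyndon {n : ℕ} (l : List (Fin n)) : Prop :=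
  l ≠ [] ∧ ∀ k : ℕ, 0 < k → k < l.length → LexLt l (l.drop k)

/-- `B_w = b_{i_1} ⋯ b_{i_k} ∈ R` for the word `w = v_{i_1} ⋯ v_{i_k}` (`B_w = 1` for `w = []`). -/
def Bword {n : ℕ} {R : Type*} [Monoid R] (b : Fin n → R) (w : List (Fin n)) : R :=
  (w.map b).prod

/-- A word `g` is good if `B_g` does not lie in the `K`-linear span of the `B_w` with `w ≺ g`. -/
def IsGood (K : Type*) {n : ℕ} {R : Type*} [Field K] [Ring R] [Algebra K R]
    (b : Fin n → R) (g : List (Fin n)) : Prop :=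
  Bword b g ∉ Submodule.span K (Bword b '' {w | PrecLt w g})

/-- The subring `ℤ[q, q⁻¹]` of `ℚ(q)`. -/
noncomputable def LaurentInt : Subring (RatFunc ℚ) :=
  Subring.closure {RatFunc.X, (RatFunc.X)⁻¹}

/-- A word `w` is integral if `B_w` is a `ℤ[q,q⁻¹]`-linear combination of the `B_g` with `g` a
good word satisfying `g ≼ w`. -/
def IsIntegralWord {n : ℕ} {R : Type*} [Ring R] [Algebra (RatFunc ℚ) R]
    (b : Fin n → R) (w : List (Fin n)) : Prop :=
  ∃ (s : Finset (List (Fin n))) (c : List (Fin n) → RatFunc ℚ),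
    (∀ g ∈ s, IsGood (RatFunc ℚ) b g ∧ PrecLe g w) ∧ (∀ g ∈ s, c g ∈ LaurentInt) ∧
    Bword b w = ∑ g ∈ s, c g • Bword b g

section Words

variable {n : ℕ}

theorem LexLt.trans {x y z : List (Fin n)} (h₁ : LexLt x y) (h₂ : LexLt y z) : LexLt x z :=
  lt_trans (α := List (Fin n)) h₁ h₂

theorem LexLt.irrefl (x : List (Fin n)) : ¬ LexLt x x :=
  lt_irrefl (α := List (Fin n)) x

theorem LexLt.append_left {x y : List (Fin n)} (h : LexLt x y) (u : List (Fin n)) :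
    LexLt (u ++ x) (u ++ y) := by
  induction u with
  | nil => exact h
  | cons a u ih => exact List.Lex.cons ih

/-- A lexicographic inequality `x < y` holds either because `x` is a proper prefix of `y`, or
because of a differing letter, in which case it survives appending anything to both sides. -/
theorem LexLt.prefix_or {x y : List (Fin n)} (h : LexLt x y) :
    (∃ z, z ≠ [] ∧ y = x ++ z) ∨ ∀ u v, LexLt (x ++ u) (y ++ v) := by
  unfold LexLt at h
  induction h with
  | nil => exact Or.inl ⟨_, by simp, rfl⟩
  | rel h => exact Or.inr fun u v => List.Lex.rel h
  | cons _ ih =>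
    rcases ih with ⟨z, hz, rfl⟩ | ih
    · exact Or.inl ⟨z, hz, rfl⟩
    · exact Or.inr fun u v => List.Lex.cons (ih u v)

theorem LexLt.append_of_length_le {x y : List (Fin n)} (h : LexLt x y)
    (hl : y.length ≤ x.length) (u v : List (Fin n)) : LexLt (x ++ u) (y ++ v) := by
  rcases h.prefix_or with ⟨z, hz, rfl⟩ | h
  · simp at hl
    exact absurd hl hz
  · exact h u v

theorem isLyndon_singleton (i : Fin n) : IsLyndon [i] :=
  ⟨by simp, fun k h₁ h₂ => by simp at h₂; omega⟩

/-- The product of two Lyndon words `l₁ < l₂` is Lyndon. -/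
theorem IsLyndon.append {x y : List (Fin n)} (hx : IsLyndon x) (hy : IsLyndon y)
    (h : LexLt x y) : IsLyndon (x ++ y) := by
  have hxy : LexLt (x ++ y) y := by
    rcases h.prefix_or with ⟨z, hz, rfl⟩ | h
    · -- Here `y = x z`, and `y < z` because `z` is a proper suffix of the Lyndon word `y`.
      have hz' := List.length_pos_iff.2 hz
      have hx' := List.length_pos_iff.2 hx.1
      have := hy.2 x.length hx' (by simp; omega)
      rw [List.drop_left] at this
      exact this.append_left x
    · simpa using h y []
  refine ⟨by simp [hx.1], fun k h₁ h₂ => ?_⟩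
  rcases lt_trichotomy k x.length with hk | hk | hk
  · rw [List.drop_append_of_le_length hk.le]
    exact (hx.2 k h₁ hk).append_of_length_le (by simp) _ _
  · subst hk
    rwa [List.drop_left]
  · obtain ⟨j, rfl⟩ := Nat.exists_eq_add_of_lt hk
    rw [add_assoc, List.drop_append]
    simp only [List.length_append] at h₂
    have := hxy.trans (hy.2 (j + 1) (by omega) (by omega))
    simpa [List.drop_eq_nil_of_le] using this

theorem PrecLt.trans {x y z : List (Fin n)} (h₁ : PrecLt x y) (h₂ : PrecLt y z) :
    PrecLt x z := by
  rcases h₁ with h₁ | ⟨h₁, h₁'⟩ <;> rcases h₂ with h₂ | ⟨h₂, h₂'⟩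
  · exact Or.inl (by omega)
  · exact Or.inl (by omega)
  · exact Or.inl (by omega)
  · exact Or.inr ⟨by omega, h₂'.trans h₁'⟩

theorem PrecLt.irrefl (x : List (Fin n)) : ¬ PrecLt x x := by
  rintro (h | ⟨-, h⟩)
  · omega
  · exact LexLt.irrefl x h

theorem PrecLt.append {x y : List (Fin n)} (h : PrecLt x y) (u v : List (Fin n)) :
    PrecLt (u ++ x ++ v) (u ++ y ++ v) := by
  rcases h with h | ⟨h, h'⟩
  · exact Or.inl (by simp; omega)
  · refine Or.inr ⟨by simp; omega, ?_⟩
    rw [List.append_assoc, List.append_assoc]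
    exact (h'.append_of_length_le h.le v v).append_left u

/-- There are finitely many words of bounded length, hence finitely many words `≺ w`; their
number is strictly increasing in `w`. -/
theorem precLt_wellFounded : WellFounded (PrecLt (n := n)) := by
  refine Subrelation.wf (r := InvImage (· < ·) fun w => {x | PrecLt x w}.ncard) ?_
    (InvImage.wf _ Nat.lt_wfRel.wf)
  intro x y hxy
  refine Set.ncard_lt_ncard ⟨fun z hz => hz.trans hxy, fun h => PrecLt.irrefl x (h hxy)⟩ ?_
  refine (List.finite_length_le (Fin n) y.length).subset fun z hz => ?_
  rcases hz with hz | ⟨hz, -⟩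
  · exact hz.le
  · exact hz.le

theorem Bword_append {R : Type*} [Monoid R] {b : Fin n → R} (x y : List (Fin n)) :
    Bword b (x ++ y) = Bword b x * Bword b y := by
  simp [Bword]

end Words

section Integrality

variable {n : ℕ} {R : Type*} [Ring R] [Algebra (RatFunc ℚ) R] {b : Fin n → R}

theorem isIntegralWord_iff (w : List (Fin n)) :
    IsIntegralWord b w ↔ Bword b w ∈ Submodule.span LaurentInt
      (Bword b '' {g | IsGood (RatFunc ℚ) b g ∧ PrecLe g w}) := by
  classical
  constructor
  · rintro ⟨s, c, hs, hc, h⟩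
    rw [h]
    refine Submodule.sum_mem _ fun g hg => ?_
    exact Submodule.smul_mem _ (⟨c g, hc g hg⟩ : LaurentInt)
      (Submodule.subset_span ⟨g, hs g hg, rfl⟩)
  · intro h
    obtain ⟨f, hf, h⟩ := (Finsupp.mem_span_image_iff_linearCombination _).1 h
    exact ⟨f.support, fun g => f g, fun g hg => hf hg, fun g _ => (f g).2, h.symm⟩

theorem IsGood.isIntegralWord {w : List (Fin n)} (h : IsGood (RatFunc ℚ) b w) :
    IsIntegralWord b w :=
  (isIntegralWord_iff w).2 (Submodule.subset_span ⟨w, ⟨h, Or.inr rfl⟩, rfl⟩)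

/-- A word is integral if it is a `ℤ[q, q⁻¹]`-combination of smaller integral words. -/
theorem integral_of_mem_span {w : List (Fin n)}
    (ih : ∀ x, PrecLt x w → IsIntegralWord b x)
    (h : Bword b w ∈ Submodule.span LaurentInt (Bword b '' {x | PrecLt x w})) :
    IsIntegralWord b w := by
  rw [isIntegralWord_iff]
  refine Submodule.span_le.2 ?_ h
  rintro _ ⟨x, hx, rfl⟩
  refine Submodule.span_mono (Set.image_mono ?_) ((isIntegralWord_iff x).1 (ih x hx))
  rintro g ⟨hg, hgx | rfl⟩
  · exact ⟨hg, Or.inl (hgx.trans hx)⟩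
  · exact ⟨hg, Or.inl hx⟩

/-- Rewriting an integral, not good factor `m` of `u m v` expresses `u m v` by smaller words. -/
theorem integral_of_factor {u m v : List (Fin n)}
    (ih : ∀ x, PrecLt x (u ++ m ++ v) → IsIntegralWord b x)
    (hm : IsIntegralWord b m) (hbad : ¬ IsGood (RatFunc ℚ) b m) :
    IsIntegralWord b (u ++ m ++ v) := by
  obtain ⟨s, c, hs, hc, h⟩ := hm
  refine integral_of_mem_span ih ?_
  rw [Bword_append, Bword_append, h, Finset.mul_sum, Finset.sum_mul]
  refine Submodule.sum_mem _ fun g hg => ?_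
  rw [mul_smul_comm, smul_mul_assoc, ← Bword_append, ← Bword_append]
  refine Submodule.smul_mem _ (⟨c g, hc g hg⟩ : LaurentInt) (Submodule.subset_span ⟨_, ?_, rfl⟩)
  rcases hs g hg with ⟨hgood, hlt | rfl⟩
  · exact hlt.append u v
  · exact absurd hgood hbad

/-- A product of good Lyndon words is good, or else it has a factor `l₁ l₂` that is not good,
with `l₁ < l₂` good Lyndon words. The induction is on the number of words in the product. -/
theorem good_or_exists_factor
    (hfact : ∀ L : List (List (Fin n)),
      (∀ l ∈ L, IsLyndon l ∧ IsGood (RatFunc ℚ) b l) →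
      L.IsChain (fun a b => ¬ LexLt a b) → IsGood (RatFunc ℚ) b L.flatten)
    (k : ℕ) (L : List (List (Fin n))) (hk : L.length = k)
    (hL : ∀ l ∈ L, IsLyndon l ∧ IsGood (RatFunc ℚ) b l) :
    IsGood (RatFunc ℚ) b L.flatten ∨
      ∃ u l₁ l₂ v, L.flatten = u ++ (l₁ ++ l₂) ++ v ∧ (IsLyndon l₁ ∧ IsGood (RatFunc ℚ) b l₁) ∧
        (IsLyndon l₂ ∧ IsGood (RatFunc ℚ) b l₂) ∧ LexLt l₁ l₂ ∧
        ¬ IsGood (RatFunc ℚ) b (l₁ ++ l₂) := by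
  induction k generalizing L with
  | zero => exact Or.inl (hfact L hL (by simp [List.length_eq_zero_iff.1 hk]))
  | succ k ih =>
    by_cases hc : L.IsChain (fun a b => ¬ LexLt a b)
    · exact Or.inl (hfact L hL hc)
    rw [List.isChain_iff_forall_rel_of_append_cons_cons] at hc
    push Not at hc
    obtain ⟨l₁, l₂, P, Q, rfl, hlt⟩ := hc
    have h₁ := hL l₁ (by simp)
    have h₂ := hL l₂ (by simp)
    by_cases hg : IsGood (RatFunc ℚ) b (l₁ ++ l₂)
    · have := ih (P ++ (l₁ ++ l₂) :: Q) (by simp at hk ⊢; omega) (by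
        intro l hl
        simp only [List.mem_append, List.mem_cons] at hl
        rcases hl with hl | rfl | hl
        · exact hL l (by simp [hl])
        · exact ⟨h₁.1.append h₂.1 hlt, hg⟩
        · exact hL l (by simp [hl]))
      simpa using this
    · exact Or.inr ⟨P.flatten, l₁, l₂, Q.flatten, by simp, h₁, h₂, hlt, hg⟩

end Integrality

/-- Assume every one-letter word is good and every word whose Lyndon factorization consists of
good Lyndon words is good. Then every word is integral iff for every pair `(l₁, l₂)` of good
Lyndon words with `l₁ < l₂` lexicographically and `l₁l₂` not good, the word `l₁l₂` is
integral. -/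
theorem integral_condition_reduction {n : ℕ} {R : Type*} [Ring R] [Algebra (RatFunc ℚ) R]
    (b : Fin n → R) (hgen : Algebra.adjoin (RatFunc ℚ) (Set.range b) = ⊤)
    (hletters : ∀ i : Fin n, IsGood (RatFunc ℚ) b [i])
    (hfact : ∀ L : List (List (Fin n)),
      (∀ l ∈ L, IsLyndon l ∧ IsGood (RatFunc ℚ) b l) →
      L.Chain' (fun a b => ¬ LexLt a b) → IsGood (RatFunc ℚ) b L.flatten) :
    (∀ w : List (Fin n), IsIntegralWord b w) ↔
      (∀ l₁ l₂ : List (Fin n), IsLyndon l₁ → IsLyndon l₂ →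
        IsGood (RatFunc ℚ) b l₁ → IsGood (RatFunc ℚ) b l₂ → LexLt l₁ l₂ →
        ¬ IsGood (RatFunc ℚ) b (l₁ ++ l₂) → IsIntegralWord b (l₁ ++ l₂)) := by
  refine ⟨fun h l₁ l₂ _ _ _ _ _ _ => h _, fun h w => ?_⟩
  induction w using precLt_wellFounded.induction with
  | h w ih => ?_
  have hw : (w.map fun i => [i]).flatten = w := by
    clear ih
    induction w <;> simp_all
  have key := good_or_exists_factor hfact _ (w.map fun i => [i]) rfl (by
    intro l hl
    obtain ⟨i, -, rfl⟩ := List.mem_map.1 hl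
    exact ⟨isLyndon_singleton i, hletters i⟩)
  rw [hw] at key
  rcases key with hgood | ⟨u, l₁, l₂, v, rfl, h₁, h₂, hlt, hbad⟩
  · exact hgood.isIntegralWord
  · exact integral_of_factor ih (h l₁ l₂ h₁.1 h₂.1 h₁.2 h₂.2 hlt hbad) hbad
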